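/- With 𝒳, μ, P, Λ as in the Aida–Stroock setting, define the asymmetric Lipschitz constant Φ̃(f) = max_x ( Σ_y P(x,y)|f(x)−f(y)|²·1{f(x)>f(y)} )^{1/2} and Ξ̃⁺ = 2√Λ / Φ̃(f). Then for every λ ≥ 0 with λ < Ξ̃⁺, one has ln( E_μ[e^{λ f}] ) ≤ λ E_μ[f] + Θ( λ / Ξ̃⁺ ), where Θ(t) = Σ_{n=0}^∞ 2^n ln(1/(1 − t·4^{−n})). -/

import Mathlib

/-!
Write `Z(l) = E_μ[exp (l f)]`, `Λ` for the spectral gap, `Φ` for the asymmetric Lipschitz constant.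
The Poincaré inequality `Λ Var(g) ≤ ℰ(g,g)` (`specGap_mul_varVal_le`), applied to
`g = exp (l f / 2)`, has left side `Λ (Z(l) - Z(l/2)²)`.  By reversibility the Dirichlet form on the
right can be written as a sum over the decreasing moves only, on which
`(g x - g y)² ≤ (l²/4) (f x - f y)² exp (l f x)`; hence the right side is at most
`(l²/4) Φ² Z(l)` (`dirForm_exp_le`).  With `s = l Φ / (2 √Λ)` this says
`(1 - s²) Z(l) ≤ Z(l/2)²`, and since `s < 1` one has `s² ≤ s` and therefore
`log Z(l) ≤ log (1 / (1 - s)) + 2 log Z(l/2)` (`log_mgf_step`).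

Each halving of `l` divides `s²` by `4`, so iterating (`log_mgf_iterate`) produces the partial sums
of `Θ(s)` plus the remainder `2^N log Z(l / 2^N)`, which tends to `l E_μ[f]` because
`(log Z)'(0) = E_μ[f]` (`tendsto_pow_mul_log_mgf`).
-/

/-- Expectation of `f` under the measure `μ` on a finite set. -/
noncomputable def eVal {X : Type*} [Fintype X] (μ f : X → ℝ) : ℝ := ∑ x, μ x * f x

/-- Variance of `f` under `μ`. -/
noncomputable def varVal {X : Type*} [Fintype X] (μ f : X → ℝ) : ℝ :=
  ∑ x, μ x * (f x - eVal μ f) ^ 2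

/-- Dirichlet form of `P` relative to `μ`. -/
noncomputable def dirForm {X : Type*} [Fintype X] (μ : X → ℝ) (P : X → X → ℝ)
    (f g : X → ℝ) : ℝ :=
  (1 / 2) * ∑ x, ∑ y, (f x - f y) * (g x - g y) * (μ x * P x y)

/-- Spectral gap of `P` relative to `μ`: the infimum (= minimum) of the Dirichlet form
over functions of variance at least `1`. -/
noncomputable def specGap {X : Type*} [Fintype X] (μ : X → ℝ) (P : X → X → ℝ) : ℝ :=
  sInf {E : ℝ | ∃ f : X → ℝ, 1 ≤ varVal μ f ∧ E = dirForm μ P f f}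

/-- The `L^∞`-`L^2` Lipschitz constant of `f` with respect to one step of the chain `P`. -/
noncomputable def lipC {X : Type*} [Fintype X] [Nonempty X] (P : X → X → ℝ) (f : X → ℝ) : ℝ :=
  ⨆ x, Real.sqrt (∑ y, P x y * |f x - f y| ^ 2)

/-- The asymmetric `L^∞`-`L^2` Lipschitz constant of `f` (only decreasing moves count). -/
noncomputable def lipAsymC {X : Type*} [Fintype X] [Nonempty X] (P : X → X → ℝ)
    (f : X → ℝ) : ℝ :=
  ⨆ x, Real.sqrt (∑ y, P x y * |f x - f y| ^ 2 * (if 0 < f x - f y then 1 else 0))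

/-- `Θ(t) = ∑_{n=0}^∞ 2^n ln(1/(1 - t·4^{-n}))`. -/
noncomputable def ThetaF (t : ℝ) : ℝ :=
  ∑' n : ℕ, (2 : ℝ) ^ n * Real.log (1 / (1 - t / 4 ^ n))

/-- Positive fluctuation `ℱ⁺_μ(f;a) = μ({x : f(x) - E_μ[f] ≥ a})`. -/
noncomputable def fPlus {X : Type*} [Fintype X] (μ f : X → ℝ) (a : ℝ) : ℝ :=
  ∑ x, if a ≤ f x - eVal μ f then μ x else 0

/-- Negative fluctuation `ℱ⁻_μ(f;a) = ℱ⁺_μ(-f;a) = μ({x : f(x) - E_μ[f] ≤ -a})`. -/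
noncomputable def fMinus {X : Type*} [Fintype X] (μ f : X → ℝ) (a : ℝ) : ℝ :=
  ∑ x, if f x - eVal μ f ≤ -a then μ x else 0

/-- The constant `κ = ∑_{n=1}^∞ 2^n ln(1/(1 - 4^{-n}))`. -/
noncomputable def kapC : ℝ :=
  ∑' n : ℕ, (2 : ℝ) ^ (n + 1) * Real.log (1 / (1 - 1 / 4 ^ (n + 1)))

/-- `φ(x) = √(1 + 1/x²) - 1/x`. -/
noncomputable def phiF (x : ℝ) : ℝ := Real.sqrt (1 + 1 / x ^ 2) - 1 / x

/-- `ϑ(x) = x φ(x) + ln((2/x) φ(x))` for `x > 0`, with `ϑ(0) = 0`. -/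
noncomputable def varthetaF (x : ℝ) : ℝ :=
  if x = 0 then 0 else x * phiF x + Real.log (2 / x * phiF x)

open Filter Topology

/-- The moment generating function `l ↦ E_μ[exp (l f)]`. -/
noncomputable def mgfVal {X : Type*} [Fintype X] (μ f : X → ℝ) (l : ℝ) : ℝ :=
  ∑ x, μ x * Real.exp (l * f x)

lemma mgfVal_pos {X : Type*} [Fintype X] [Nonempty X] {μ : X → ℝ} (hμpos : ∀ x, 0 < μ x)
    (f : X → ℝ) (l : ℝ) : 0 < mgfVal μ f l :=
  Finset.sum_pos (fun x _ => mul_pos (hμpos x) (Real.exp_pos _)) Finset.univ_nonempty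

lemma dirForm_self_nonneg {X : Type*} [Fintype X] {μ : X → ℝ} (hμpos : ∀ x, 0 < μ x)
    {P : X → X → ℝ} (hP0 : ∀ x y, 0 ≤ P x y) (g : X → ℝ) : 0 ≤ dirForm μ P g g := by
  unfold dirForm
  refine mul_nonneg (by norm_num) (Finset.sum_nonneg fun x _ => Finset.sum_nonneg fun y _ => ?_)
  exact mul_nonneg (mul_self_nonneg _) (mul_nonneg (hμpos x).le (hP0 x y))

lemma varVal_const_mul {X : Type*} [Fintype X] (μ g : X → ℝ) (c : ℝ) :
    varVal μ (fun x => c * g x) = c ^ 2 * varVal μ g := by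
  have h : eVal μ (fun x => c * g x) = c * eVal μ g := by
    unfold eVal
    rw [Finset.mul_sum]
    exact Finset.sum_congr rfl fun x _ => by ring
  unfold varVal
  rw [h, Finset.mul_sum]
  exact Finset.sum_congr rfl fun x _ => by ring

lemma dirForm_const_mul {X : Type*} [Fintype X] (μ : X → ℝ) (P : X → X → ℝ) (g : X → ℝ) (c : ℝ) :
    dirForm μ P (fun x => c * g x) (fun x => c * g x) = c ^ 2 * dirForm μ P g g := by
  unfold dirForm
  simp only [Finset.mul_sum]
  exact Finset.sum_congr rfl fun x _ => Finset.sum_congr rfl fun y _ => by ring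

/-- Poincaré inequality: the spectral gap, defined by functions of variance at least one, controls
every function by homogeneity. -/
lemma specGap_mul_varVal_le {X : Type*} [Fintype X] {μ : X → ℝ} (hμpos : ∀ x, 0 < μ x)
    {P : X → X → ℝ} (hP0 : ∀ x y, 0 ≤ P x y) (g : X → ℝ) :
    specGap μ P * varVal μ g ≤ dirForm μ P g g := by
  have hv : 0 ≤ varVal μ g :=
    Finset.sum_nonneg fun x _ => mul_nonneg (hμpos x).le (sq_nonneg _)
  rcases hv.eq_or_lt with h0 | hpos
  · rw [← h0, mul_zero]
    exact dirForm_self_nonneg hμpos hP0 g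
  · have hc : (Real.sqrt (varVal μ g))⁻¹ ^ 2 = (varVal μ g)⁻¹ := by
      rw [inv_pow, Real.sq_sqrt hv]
    have hle : specGap μ P ≤ (varVal μ g)⁻¹ * dirForm μ P g g := by
      refine csInf_le ⟨0, ?_⟩ ⟨fun x => (Real.sqrt (varVal μ g))⁻¹ * g x, ?_, ?_⟩
      · rintro E ⟨h, _, rfl⟩
        exact dirForm_self_nonneg hμpos hP0 h
      · rw [varVal_const_mul, hc, inv_mul_cancel₀ hpos.ne']
      · rw [dirForm_const_mul, hc]
    calc specGap μ P * varVal μ g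
        ≤ (varVal μ g)⁻¹ * dirForm μ P g g * varVal μ g := mul_le_mul_of_nonneg_right hle hv
      _ = dirForm μ P g g := by field_simp

lemma sum_decreasing_le_lipAsymC_sq {X : Type*} [Fintype X] [Nonempty X] {P : X → X → ℝ}
    (hP0 : ∀ x y, 0 ≤ P x y) (f : X → ℝ) (x : X) :
    ∑ y, P x y * |f x - f y| ^ 2 * (if 0 < f x - f y then 1 else 0) ≤ lipAsymC P f ^ 2 := by
  have h0 : 0 ≤ ∑ y, P x y * |f x - f y| ^ 2 * (if 0 < f x - f y then (1 : ℝ) else 0) :=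
    Finset.sum_nonneg fun y _ => mul_nonneg (mul_nonneg (hP0 x y) (by positivity))
      (by split_ifs <;> norm_num)
  rw [← Real.sq_sqrt h0]
  refine pow_le_pow_left₀ (Real.sqrt_nonneg _) ?_ 2
  exact le_ciSup (f := fun x => Real.sqrt (∑ y, P x y * |f x - f y| ^ 2 *
    (if 0 < f x - f y then (1 : ℝ) else 0))) (Set.finite_range _).bddAbove x

/-- Quadratic increment bound for the exponential, with the exponential taken at the larger
endpoint. -/
lemma sq_exp_half_sub_le {l a b : ℝ} (hl : 0 ≤ l) (hab : b ≤ a) :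
    (Real.exp (l / 2 * a) - Real.exp (l / 2 * b)) ^ 2 ≤
      l ^ 2 / 4 * (a - b) ^ 2 * Real.exp (l * a) := by
  have h1 : Real.exp (l / 2 * b) = Real.exp (l / 2 * a) * Real.exp (-(l / 2 * (a - b))) := by
    rw [← Real.exp_add]; congr 1; ring
  have h2 : Real.exp (l * a) = Real.exp (l / 2 * a) ^ 2 := by
    rw [← Real.exp_nat_mul]; congr 1; push_cast; ring
  have h3 := Real.add_one_le_exp (-(l / 2 * (a - b)))
  have h4 : Real.exp (-(l / 2 * (a - b))) ≤ 1 :=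
    Real.exp_le_one_iff.2 (by have := mul_nonneg hl (sub_nonneg.2 hab); linarith)
  have h5 : (1 - Real.exp (-(l / 2 * (a - b)))) ^ 2 ≤ (l / 2 * (a - b)) ^ 2 :=
    pow_le_pow_left₀ (by linarith) (by linarith) 2
  rw [h1, h2]
  calc _ = Real.exp (l / 2 * a) ^ 2 * (1 - Real.exp (-(l / 2 * (a - b)))) ^ 2 := by ring
    _ ≤ Real.exp (l / 2 * a) ^ 2 * (l / 2 * (a - b)) ^ 2 :=
        mul_le_mul_of_nonneg_left h5 (sq_nonneg _)
    _ = _ := by ring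

/-- Reversibility lets each edge be charged to its endpoint with the larger value of `f`, so that
only decreasing moves contribute. -/
lemma dirForm_exp_le {X : Type*} [Fintype X] [Nonempty X] {μ : X → ℝ} (hμpos : ∀ x, 0 < μ x)
    {P : X → X → ℝ} (hP0 : ∀ x y, 0 ≤ P x y) (hrev : ∀ x y, μ x * P x y = μ y * P y x)
    (f : X → ℝ) {l : ℝ} (hl : 0 ≤ l) :
    dirForm μ P (fun x => Real.exp (l / 2 * f x)) (fun x => Real.exp (l / 2 * f x)) ≤
      l ^ 2 / 4 * lipAsymC P f ^ 2 * mgfVal μ f l := by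
  -- `B x y` is the charge of the edge `xy` to `x`; it vanishes unless `f y < f x`.
  let B : X → X → ℝ := fun x y => l ^ 2 / 4 * (μ x * Real.exp (l * f x)) *
    (P x y * |f x - f y| ^ 2 * (if 0 < f x - f y then 1 else 0))
  have hedge : ∀ x y, (Real.exp (l / 2 * f x) - Real.exp (l / 2 * f y)) *
      (Real.exp (l / 2 * f x) - Real.exp (l / 2 * f y)) * (μ x * P x y) ≤ B x y + B y x := by
    intro x y
    have hw : 0 ≤ μ x * P x y := mul_nonneg (hμpos x).le (hP0 x y)
    rcases lt_trichotomy (f x) (f y) with h | h | h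
    · have hB : B x y + B y x = l ^ 2 / 4 * (f y - f x) ^ 2 * Real.exp (l * f y) *
          (μ y * P y x) := by
        simp only [B, sq_abs]
        rw [if_neg (by linarith), if_pos (by linarith)]
        ring
      rw [hB, ← hrev x y]
      refine mul_le_mul_of_nonneg_right ?_ hw
      have := sq_exp_half_sub_le hl h.le
      nlinarith
    · simp [B, h]
    · have hB : B x y + B y x = l ^ 2 / 4 * (f x - f y) ^ 2 * Real.exp (l * f x) *
          (μ x * P x y) := by
        simp only [B, sq_abs]
        rw [if_pos (by linarith), if_neg (by linarith)]
        ring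
      rw [hB]
      refine mul_le_mul_of_nonneg_right ?_ hw
      have := sq_exp_half_sub_le hl h.le
      nlinarith
  have hsum : ∑ x, ∑ y, (B x y + B y x) = 2 * ∑ x, ∑ y, B x y := by
    simp only [Finset.sum_add_distrib]
    rw [Finset.sum_comm (f := fun x y => B y x)]
    ring
  have hB : ∑ x, ∑ y, B x y ≤ l ^ 2 / 4 * lipAsymC P f ^ 2 * mgfVal μ f l := by
    unfold mgfVal
    rw [Finset.mul_sum]
    refine Finset.sum_le_sum fun x _ => ?_
    simp only [B]
    rw [← Finset.mul_sum]
    have hc : 0 ≤ l ^ 2 / 4 * (μ x * Real.exp (l * f x)) :=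
      mul_nonneg (by positivity) (mul_nonneg (hμpos x).le (Real.exp_pos _).le)
    calc _ ≤ l ^ 2 / 4 * (μ x * Real.exp (l * f x)) * lipAsymC P f ^ 2 :=
          mul_le_mul_of_nonneg_left (sum_decreasing_le_lipAsymC_sq hP0 f x) hc
      _ = _ := by ring
  refine le_trans ?_ hB
  have := Finset.sum_le_sum fun x (_ : x ∈ Finset.univ) =>
    Finset.sum_le_sum fun y (_ : y ∈ Finset.univ) => hedge x y
  rw [hsum] at this
  unfold dirForm
  linarith

lemma varVal_exp_half {X : Type*} [Fintype X] {μ : X → ℝ} (hμ1 : ∑ x, μ x = 1) (f : X → ℝ)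
    (l : ℝ) : varVal μ (fun x => Real.exp (l / 2 * f x)) =
      mgfVal μ f l - mgfVal μ f (l / 2) ^ 2 := by
  have h : eVal μ (fun x => Real.exp (l / 2 * f x)) = mgfVal μ f (l / 2) := rfl
  have h2 : ∀ x, Real.exp (l * f x) = Real.exp (l / 2 * f x) ^ 2 := fun x => by
    rw [← Real.exp_nat_mul]; congr 1; push_cast; ring
  unfold varVal
  rw [h]
  set m := mgfVal μ f (l / 2) with hm
  have h3 : ∀ x, μ x * (Real.exp (l / 2 * f x) - m) ^ 2 =
      μ x * Real.exp (l * f x) - 2 * m * (μ x * Real.exp (l / 2 * f x)) + m ^ 2 * μ x := by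
    intro x; rw [h2]; ring
  simp only [h3, Finset.sum_add_distrib, Finset.sum_sub_distrib, ← Finset.mul_sum, hμ1]
  rw [show ∑ x, μ x * Real.exp (l / 2 * f x) = m from rfl]
  unfold mgfVal
  ring

/-- One halving step; any `t < 1` with `(l Φ)² / (4 Λ) ≤ t` is admissible. -/
lemma log_mgf_step {X : Type*} [Fintype X] [Nonempty X] {μ : X → ℝ} (hμpos : ∀ x, 0 < μ x)
    (hμ1 : ∑ x, μ x = 1) {P : X → X → ℝ} (hP0 : ∀ x y, 0 ≤ P x y)
    (hrev : ∀ x y, μ x * P x y = μ y * P y x) (f : X → ℝ) (hgap : 0 < specGap μ P)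
    {l t : ℝ} (hl : 0 ≤ l) (ht : t < 1)
    (hlt : l ^ 2 / 4 * lipAsymC P f ^ 2 ≤ t * specGap μ P) :
    Real.log (mgfVal μ f l) ≤ Real.log (1 / (1 - t)) + 2 * Real.log (mgfVal μ f (l / 2)) := by
  have hZ := mgfVal_pos hμpos f l
  have hZ2 := mgfVal_pos hμpos f (l / 2)
  have h1 := (specGap_mul_varVal_le hμpos hP0 _).trans (dirForm_exp_le hμpos hP0 hrev f hl)
  rw [varVal_exp_half hμ1] at h1
  have h2 : specGap μ P * (mgfVal μ f l - mgfVal μ f (l / 2) ^ 2) ≤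
      specGap μ P * (t * mgfVal μ f l) := by
    calc _ ≤ _ := h1
      _ ≤ t * specGap μ P * mgfVal μ f l := mul_le_mul_of_nonneg_right hlt hZ.le
      _ = _ := by ring
  have h3 := le_of_mul_le_mul_left h2 hgap
  have ht' : 0 < 1 - t := by linarith
  have h4 : (1 - t) * mgfVal μ f l ≤ mgfVal μ f (l / 2) ^ 2 := by linarith
  have h5 := Real.log_le_log (mul_pos ht' hZ) h4
  rw [Real.log_mul ht'.ne' hZ.ne', Real.log_pow] at h5
  rw [one_div, Real.log_inv]
  push_cast at h5
  linarith

lemma log_mgf_iterate {X : Type*} [Fintype X] [Nonempty X] {μ : X → ℝ} (hμpos : ∀ x, 0 < μ x)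
    (hμ1 : ∑ x, μ x = 1) {P : X → X → ℝ} (hP0 : ∀ x y, 0 ≤ P x y)
    (hrev : ∀ x y, μ x * P x y = μ y * P y x) (f : X → ℝ) (hgap : 0 < specGap μ P)
    {l t : ℝ} (hl : 0 ≤ l) (ht0 : 0 ≤ t) (ht : t < 1)
    (hlt : l ^ 2 / 4 * lipAsymC P f ^ 2 ≤ t * specGap μ P) (N : ℕ) :
    Real.log (mgfVal μ f l) ≤
      ∑ n ∈ Finset.range N, (2 : ℝ) ^ n * Real.log (1 / (1 - t / 4 ^ n)) +
        2 ^ N * Real.log (mgfVal μ f (l / 2 ^ N)) := by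
  induction N with
  | zero => simp
  | succ N ih =>
    have h4 : (0 : ℝ) < 4 ^ N := by positivity
    have hstep := log_mgf_step hμpos hμ1 hP0 hrev f hgap (l := l / 2 ^ N) (t := t / 4 ^ N)
      (by positivity)
      ((div_le_self ht0 (one_le_pow₀ (by norm_num))).trans_lt ht)
      (by
        have hp : ((2 : ℝ) ^ N) ^ 2 = 4 ^ N := by rw [← pow_mul, mul_comm, pow_mul]; norm_num
        calc (l / 2 ^ N) ^ 2 / 4 * lipAsymC P f ^ 2
            = (l ^ 2 / 4 * lipAsymC P f ^ 2) / 4 ^ N := by rw [div_pow, hp]; ring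
          _ ≤ (t * specGap μ P) / 4 ^ N := div_le_div_of_nonneg_right hlt h4.le
          _ = _ := by ring)
    have he : l / 2 ^ N / 2 = l / 2 ^ (N + 1) := by rw [div_div, pow_succ]
    rw [he] at hstep
    have h6 := mul_le_mul_of_nonneg_left hstep (by positivity : (0 : ℝ) ≤ 2 ^ N)
    rw [Finset.sum_range_succ, pow_succ (2 : ℝ) N]
    rw [pow_succ (2 : ℝ) N] at h6
    linarith

/-- The terms of `Θ(t)` are dominated by the geometric sequence `(t / (1 - t)) 2^{-n}`. -/
lemma summable_theta {t : ℝ} (ht0 : 0 ≤ t) (ht : t < 1) :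
    Summable fun n : ℕ => (2 : ℝ) ^ n * Real.log (1 / (1 - t / 4 ^ n)) := by
  have hle : ∀ n : ℕ, t / 4 ^ n ≤ t := fun n => div_le_self ht0 (one_le_pow₀ (by norm_num))
  have h0 : ∀ n : ℕ, 0 ≤ t / 4 ^ n := fun n => by positivity
  refine Summable.of_nonneg_of_le (f := fun n : ℕ => t / (1 - t) * (1 / 2) ^ n) (fun n => ?_)
    (fun n => ?_) (summable_geometric_two.mul_left _)
  · refine mul_nonneg (by positivity) (Real.log_nonneg ?_)
    rw [le_div_iff₀ (by linarith [hle n])]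
    linarith [h0 n]
  · have hpos : 0 < 1 - t / 4 ^ n := by linarith [hle n]
    have h1 : Real.log (1 / (1 - t / 4 ^ n)) ≤ t / 4 ^ n / (1 - t) := by
      refine (Real.log_le_sub_one_of_pos (by positivity)).trans ?_
      have : 1 / (1 - t / 4 ^ n) - 1 = t / 4 ^ n / (1 - t / 4 ^ n) := by
        rw [div_sub_one hpos.ne', sub_sub_cancel]
      rw [this]
      exact div_le_div_of_nonneg_left (h0 n) (by linarith) (by linarith [hle n])
    have h2 : (2 : ℝ) ^ n * (1 / 2) ^ n = 1 := by rw [← mul_pow]; norm_num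
    have h4 : (4 : ℝ) ^ n = 2 ^ n * 2 ^ n := by rw [← mul_pow]; norm_num
    calc _ ≤ 2 ^ n * (t / 4 ^ n / (1 - t)) := mul_le_mul_of_nonneg_left h1 (by positivity)
      _ = t / (1 - t) * (1 / 2) ^ n := by
        rw [h4, one_div, inv_pow]
        have : 1 - t ≠ 0 := by linarith
        field_simp

lemma tendsto_pow_mul_log_mgf {X : Type*} [Fintype X] {μ : X → ℝ} (hμ1 : ∑ x, μ x = 1)
    (f : X → ℝ) {l : ℝ} (hl : 0 < l) :
    Tendsto (fun N : ℕ => (2 : ℝ) ^ N * Real.log (mgfVal μ f (l / 2 ^ N))) atTop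
      (𝓝 (l * eVal μ f)) := by
  have hZ0 : mgfVal μ f 0 = 1 := by simp [mgfVal, hμ1]
  have hd : HasDerivAt (mgfVal μ f) (eVal μ f) 0 := by
    unfold eVal
    refine HasDerivAt.fun_sum fun x _ => ?_
    have := (((hasDerivAt_id (0 : ℝ)).mul_const (f x)).exp).const_mul (μ x)
    simpa using this
  have hlog : HasDerivAt (fun u => Real.log (mgfVal μ f u)) (eVal μ f) 0 := by
    simpa [hZ0] using hd.log (by rw [hZ0]; exact one_ne_zero)
  have hslope := hasDerivAt_iff_tendsto_slope_zero.1 hlog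
  have hseq : Tendsto (fun N : ℕ => l / (2 : ℝ) ^ N) atTop (𝓝[≠] 0) := by
    refine tendsto_nhdsWithin_iff.2 ⟨?_, Eventually.of_forall fun N => ?_⟩
    · exact (tendsto_pow_atTop_atTop_of_one_lt (by norm_num : (1 : ℝ) < 2)).const_div_atTop l
    · exact (by positivity : l / (2 : ℝ) ^ N ≠ 0)
  refine ((hslope.comp hseq).const_mul l).congr fun N => ?_
  simp only [Function.comp, zero_add, hZ0, Real.log_one, sub_zero, smul_eq_mul]
  field_simp

/-- **Theorem 2 (asymmetric Aida–Stroock)**: with `Ξ̃⁺ = 2√Λ / Φ̃(f)`, for `0 ≤ λ < Ξ̃⁺`,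
`ln E_μ[e^{λ f}] ≤ λ E_μ[f] + Θ(λ/Ξ̃⁺)`. -/
theorem asym_aida_stroock_mgf_bound
    {X : Type*} [Fintype X] [Nonempty X] (hX : 1 < Fintype.card X)
    (μ : X → ℝ) (hμpos : ∀ x, 0 < μ x) (hμ1 : ∑ x, μ x = 1)
    (P : X → X → ℝ) (hP0 : ∀ x y, 0 ≤ P x y) (hP1 : ∀ x, ∑ y, P x y = 1)
    (hrev : ∀ x y, μ x * P x y = μ y * P y x)
    (f : X → ℝ) (hΦ : 0 < lipAsymC P f) (lam : ℝ) (hlam0 : 0 ≤ lam)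
    (hlam : lam < 2 * Real.sqrt (specGap μ P) / lipAsymC P f) :
    Real.log (∑ x, μ x * Real.exp (lam * f x)) ≤
      lam * eVal μ f +
        ThetaF (lam / (2 * Real.sqrt (specGap μ P) / lipAsymC P f)) := by
  have hgap : 0 < specGap μ P := by
    by_contra h
    rw [Real.sqrt_eq_zero_of_nonpos (not_lt.1 h)] at hlam
    simp only [mul_zero, zero_div] at hlam
    linarith
  have hsq : 0 < Real.sqrt (specGap μ P) := Real.sqrt_pos.2 hgap
  have hΞ : 0 < 2 * Real.sqrt (specGap μ P) / lipAsymC P f := by positivity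
  set t := lam / (2 * Real.sqrt (specGap μ P) / lipAsymC P f) with ht_def
  have ht0 : 0 ≤ t := div_nonneg hlam0 hΞ.le
  have ht1 : t < 1 := (div_lt_one hΞ).2 hlam
  have hlt : lam ^ 2 / 4 * lipAsymC P f ^ 2 ≤ t * specGap μ P := by
    -- The left side is exactly `t² Λ`.
    have h1 : lam * lipAsymC P f = t * (2 * Real.sqrt (specGap μ P)) := by
      rw [ht_def]; field_simp
    have h2 : lam ^ 2 / 4 * lipAsymC P f ^ 2 = t ^ 2 * specGap μ P := by
      calc _ = (lam * lipAsymC P f) ^ 2 / 4 := by ring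
        _ = t ^ 2 * Real.sqrt (specGap μ P) ^ 2 := by rw [h1]; ring
        _ = _ := by rw [Real.sq_sqrt hgap.le]
    rw [h2]
    exact mul_le_mul_of_nonneg_right (by nlinarith) hgap.le
  rcases hlam0.eq_or_lt with h0 | hpos
  · have : t = 0 := by rw [ht_def, ← h0, zero_div]
    simp [this, ← h0, hμ1, ThetaF]
  · have hlim := (summable_theta ht0 ht1).hasSum.tendsto_sum_nat.add
      (tendsto_pow_mul_log_mgf hμ1 f hpos)
    have := ge_of_tendsto' hlim
      (log_mgf_iterate hμpos hμ1 hP0 hrev f hgap hlam0 ht0 ht1 hlt)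
    rw [add_comm]
    exact this
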